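/- (Large deviations lower bound under uniqueness of potentials.) Suppose uniqueness of Kantorovich potentials holds on X_0 := proj_X Γ, i.e. for any c-convex functions ψ_1, ψ_2 on X with Γ ⊂ ∂_c ψ_i (i = 1,2), ψ_1 − ψ_2 is constant on X_0. Then for every open set U ⊂ X_0 × Y_0 (where Y_0 := proj_Y Γ), liminf_{ε→0} ε log π_ε(U) ≥ −inf_{(x,y)∈U} I(x,y). -/

import Mathlib

open MeasureTheory Filter Topology Set
open scoped ENNReal

noncomputable section

namespace EOT

variable {X Y : Type*}

/-- A coupling of `μ` and `ν`: a probability measure on the product with the given marginals. -/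
def IsCoupling [MeasurableSpace X] [MeasurableSpace Y]
    (μ : Measure X) (ν : Measure Y) (π : Measure (X × Y)) : Prop :=
  IsProbabilityMeasure π ∧ π.map Prod.fst = μ ∧ π.map Prod.snd = ν

/-- `(c,ε)`-cyclical invariance: `π` is equivalent to `P = μ ⊗ ν`, with a positive version of the
density satisfying the cyclical identity for all `k` points. -/
def IsCyclInvariant [MeasurableSpace X] [MeasurableSpace Y]
    (c : X → Y → ℝ) (ε : ℝ) (μ : Measure X) (ν : Measure Y)
    (π : Measure (X × Y)) : Prop :=
  IsCoupling μ ν π ∧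
  ∃ D : X × Y → ℝ, Measurable D ∧ (∀ z, 0 < D z) ∧
    π = (μ.prod ν).withDensity (fun z => ENNReal.ofReal (D z)) ∧
    ∀ (k : ℕ) (x : Fin (k + 1) → X) (y : Fin (k + 1) → Y),
      (∏ i, D (x i, y i)) =
        Real.exp (-(1 / ε) * ((∑ i, c (x i) (y i)) - ∑ i, c (x i) (y (i + 1)))) *
        ∏ i, D (x i, y (i + 1))

/-- Topological support of a measure. -/
def mSupport {Z : Type*} [TopologicalSpace Z] [MeasurableSpace Z] (π : Measure Z) : Set Z :=
  {z | ∀ U : Set Z, IsOpen U → z ∈ U → 0 < π U}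

/-- Weak convergence `π ε → π₀` as `ε → 0⁺`, tested against bounded continuous functions. -/
def TendstoWeakly {Z : Type*} [TopologicalSpace Z] [MeasurableSpace Z]
    (π : ℝ → Measure Z) (π₀ : Measure Z) : Prop :=
  ∀ f : BoundedContinuousFunction Z ℝ,
    Tendsto (fun ε => ∫ z, f z ∂(π ε)) (𝓝[>] (0 : ℝ)) (𝓝 (∫ z, f z ∂π₀))

/-- `c`-cyclical monotonicity of a set `Γ ⊆ X × Y`. -/
def CCyclMonotone (c : X → Y → ℝ) (Γ : Set (X × Y)) : Prop :=
  ∀ (k : ℕ) (p : Fin (k + 1) → X × Y), (∀ i, p i ∈ Γ) →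
    (∑ i, c (p i).1 (p i).2) ≤ ∑ i, c (p i).1 (p (i + 1)).2

/-- The rate function `I(x,y)`: supremum over `k ≥ 2`, points `(x_i,y_i)_{i=2}^k ⊆ Γ`
(the first point being `z`) and permutations `σ` of the cost difference. -/
def rateI (c : X → Y → ℝ) (Γ : Set (X × Y)) (z : X × Y) : EReal :=
  ⨆ (k : ℕ) (p : Fin (k + 2) → X × Y) (_ : p 0 = z) (_ : ∀ i, i ≠ 0 → p i ∈ Γ)
    (σ : Equiv.Perm (Fin (k + 2))),
    (((∑ i, c (p i).1 (p i).2) - ∑ i, c (p i).1 (p (σ i)).2 : ℝ) : EReal)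

/-- The variant of the rate function using only the cyclic shift. -/
def rateICyc (c : X → Y → ℝ) (Γ : Set (X × Y)) (z : X × Y) : EReal :=
  ⨆ (k : ℕ) (p : Fin (k + 2) → X × Y) (_ : p 0 = z) (_ : ∀ i, i ≠ 0 → p i ∈ Γ),
    (((∑ i, c (p i).1 (p i).2) - ∑ i, c (p i).1 (p (i + 1)).2 : ℝ) : EReal)

open scoped Classical in
/-- Relative entropy (Kullback–Leibler divergence) `H(π|R)`, valued in `EReal`. -/
def relEntropy {Z : Type*} [MeasurableSpace Z] (π R : Measure Z) : EReal :=
  if π ≪ R ∧ Integrable (fun z => Real.log (π.rnDeriv R z).toReal) π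
  then ((∫ z, Real.log (π.rnDeriv R z).toReal ∂π : ℝ) : EReal)
  else ⊤

/-- Transport cost `∫ c dπ` (as a lower integral). -/
def transportCost [MeasurableSpace X] [MeasurableSpace Y]
    (c : X → Y → ℝ) (π : Measure (X × Y)) : ℝ≥0∞ :=
  ∫⁻ z, ENNReal.ofReal (c z.1 z.2) ∂π

/-- Entropic optimal transport objective `∫ c dπ + ε H(π|μ⊗ν)`. -/
def eotObj [MeasurableSpace X] [MeasurableSpace Y]
    (c : X → Y → ℝ) (ε : ℝ) (μ : Measure X) (ν : Measure Y) (π : Measure (X × Y)) : EReal :=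
  (transportCost c π : EReal) + (ε : EReal) * relEntropy π (μ.prod ν)

/-- The `c`-conjugate `ψ^c(y) = inf_x [ψ(x) + c(x,y)]`. -/
def cConj (c : X → Y → ℝ) (ψ : X → EReal) (y : Y) : EReal :=
  ⨅ x, ψ x + (c x y : EReal)

/-- A proper `c`-convex function `ψ(x) = sup_y [ζ(y) − c(x,y)]`. -/
def IsCConvex (c : X → Y → ℝ) (ψ : X → EReal) : Prop :=
  (∀ x, ψ x ≠ ⊥) ∧ (∃ x, ψ x ≠ ⊤) ∧
  ∃ ζ : Y → EReal, ∀ x, ψ x = ⨆ y, ζ y - (c x y : EReal)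

/-- The `c`-subdifferential `∂_c ψ = {(x,y) : ψ^c(y) − ψ(x) = c(x,y)}`. -/
def cSubdiff (c : X → Y → ℝ) (ψ : X → EReal) : Set (X × Y) :=
  {p | cConj c ψ p.2 - ψ p.1 = (c p.1 p.2 : EReal)}

/-- A Kantorovich potential for `Γ`: a `c`-convex `ψ` with `Γ ⊆ ∂_c ψ`. -/
def IsKantorovichPotential (c : X → Y → ℝ) (Γ : Set (X × Y)) (ψ : X → EReal) : Prop :=
  IsCConvex c ψ ∧ Γ ⊆ cSubdiff c ψ

/-- Uniqueness of Kantorovich potentials on a set `Λ ⊆ X`. -/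
def UniquenessOfPotentials (c : X → Y → ℝ) (Γ : Set (X × Y)) (Λ : Set X) : Prop :=
  ∀ ψ₁ ψ₂ : X → EReal, IsKantorovichPotential c Γ ψ₁ → IsKantorovichPotential c Γ ψ₂ →
    ∀ x ∈ Λ, ∀ x' ∈ Λ, ψ₁ x - ψ₂ x = ψ₁ x' - ψ₂ x'

/-- The Rockafellar antiderivative `ψ_{(x₀,y₀)}` of `Γ`. -/
def rockafellar (c : X → Y → ℝ) (Γ : Set (X × Y)) (z₀ : X × Y) (x : X) : EReal :=
  ⨆ (k : ℕ) (p : Fin (k + 1) → X × Y) (_ : ∀ i, p i ∈ Γ),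
    ((c z₀.1 z₀.2 - c (p 0).1 z₀.2 +
        ∑ i : Fin (k + 1),
          (c (p i).1 (p i).2 -
            c (if h : (i : ℕ) + 1 < k + 1 then (p ⟨(i : ℕ) + 1, h⟩).1 else x) (p i).2) : ℝ) : EReal)

section Helpers

set_option linter.unusedSectionVars false

/-- Chains in `Γ` started at `y₀`, ending at `v`, with accumulated value `t`. -/
inductive Reach (c : X → Y → ℝ) (Γ : Set (X × Y)) (y₀ : Y) : Y → ℝ → Prop
  | base : Reach c Γ y₀ y₀ 0
  | step {v : Y} {t : ℝ} (a : X) (b : Y) : Reach c Γ y₀ v t → (a, b) ∈ Γ →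
      Reach c Γ y₀ b (t - c a v + c a b)

/-- The exponential weight. -/
def wE (s ε : ℝ) : ℝ≥0∞ := ENNReal.ofReal (Real.exp (s / ε))

lemma wE_mul (s t ε : ℝ) : wE s ε * wE t ε = wE (s + t) ε := by
  unfold wE
  rw [← ENNReal.ofReal_mul (Real.exp_pos _).le, ← Real.exp_add, add_div]

lemma wE_mono {s t ε : ℝ} (hε : 0 < ε) (h : s ≤ t) : wE s ε ≤ wE t ε := by
  unfold wE
  gcongr

lemma wE_zero (ε : ℝ) : wE 0 ε = 1 := by simp [wE]

lemma wE_small {δ : ℝ} (hδ : 0 < δ) {κ : ℝ≥0∞} (hκ : 0 < κ) :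
    ∀ᶠ ε in 𝓝[>] (0 : ℝ), wE (-δ) ε ≤ κ := by
  have h1 : Tendsto (fun ε : ℝ => -δ / ε) (𝓝[>] (0 : ℝ)) atBot := by
    have := (tendsto_inv_nhdsGT_zero (𝕜 := ℝ)).const_mul_atTop_of_neg (neg_lt_zero.2 hδ)
    simpa [div_eq_mul_inv] using this
  have h2 := ENNReal.tendsto_ofReal (Real.tendsto_exp_atBot.comp h1)
  rw [ENNReal.ofReal_zero] at h2
  exact h2.eventually_le_const hκ

variable [MeasurableSpace X] [MetricSpace X] [PolishSpace X] [BorelSpace X]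
  [MeasurableSpace Y] [MetricSpace Y] [PolishSpace Y] [BorelSpace Y]

lemma exists_factors {μ : Measure X} {ν : Measure Y}
    [IsProbabilityMeasure μ] [IsProbabilityMeasure ν]
    {c : X → Y → ℝ} (hc : Continuous fun p : X × Y => c p.1 p.2)
    {ε : ℝ} (hε : 0 < ε) {π : Measure (X × Y)} (h : IsCyclInvariant c ε μ ν π) :
    ∃ (α : Set X → ℝ≥0∞) (β : Set Y → ℝ≥0∞),
      ∀ A B, MeasurableSet A → MeasurableSet B → ∀ m : ℝ,
        ((∀ x ∈ A, ∀ y ∈ B, m ≤ c x y) → π (A ×ˢ B) ≤ α A * β B * wE (-m) ε) ∧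
        ((∀ x ∈ A, ∀ y ∈ B, c x y ≤ m) → α A * β B * wE (-m) ε ≤ π (A ×ˢ B)) := by
  obtain ⟨-, D, hD, hDpos, hπ, hcyc⟩ := h
  obtain ⟨x₁⟩ : Nonempty X := nonempty_of_isProbabilityMeasure μ
  obtain ⟨y₁⟩ : Nonempty Y := nonempty_of_isProbabilityMeasure ν
  set a : X → ℝ := fun x => D (x, y₁) * Real.exp (c x y₁ / ε) with ha
  set b : Y → ℝ := fun y =>
    D (x₁, y) * Real.exp (c x₁ y / ε) * Real.exp (-c x₁ y₁ / ε) / D (x₁, y₁) with hb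
  have ha0 : ∀ x, 0 ≤ a x := fun x => by have := hDpos (x, y₁); positivity
  have hb0 : ∀ y, 0 ≤ b y := fun y => by
    have := hDpos (x₁, y); have := hDpos (x₁, y₁); positivity
  have hcm : Measurable fun p : X × Y => c p.1 p.2 := hc.measurable
  have hcx : Measurable fun x => c x y₁ := hcm.comp (measurable_id.prodMk measurable_const)
  have hcy : Measurable fun y => c x₁ y := hcm.comp (measurable_const.prodMk measurable_id)
  have ham : Measurable a :=
    (hD.comp (measurable_id.prodMk measurable_const)).mul (hcx.div_const ε).exp
  have hbm : Measurable b :=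
    (((hD.comp (measurable_const.prodMk measurable_id)).mul (hcy.div_const ε).exp).mul_const
      _).div_const _
  have key : ∀ x y, D (x, y) = a x * b y * Real.exp (-c x y / ε) := by
    intro x y
    have := hcyc 1 ![x, x₁] ![y, y₁]
    simp [Fin.prod_univ_two, Fin.sum_univ_two] at this
    have hne := (hDpos (x₁, y₁)).ne'
    rw [ha, hb]
    field_simp
    rw [this]
    have e : Real.exp (-(ε⁻¹ * (c x y + c x₁ y₁ - (c x y₁ + c x₁ y)))) =
      Real.exp (c x y₁ / ε) * Real.exp (c x₁ y / ε) * Real.exp (-c x₁ y₁ / ε)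
        * Real.exp (-c x y / ε) := by
      rw [← Real.exp_add, ← Real.exp_add, ← Real.exp_add]
      congr 1
      field_simp
      ring
    rw [e]
    simp only [neg_div]
    ring
  refine ⟨fun A => ∫⁻ x in A, ENNReal.ofReal (a x) ∂μ,
    fun B => ∫⁻ y in B, ENNReal.ofReal (b y) ∂ν, fun A B hA hB m => ?_⟩
  have hAB : MeasurableSet (A ×ˢ B) := hA.prod hB
  have hint : (∫⁻ x in A, ENNReal.ofReal (a x) ∂μ) * (∫⁻ y in B, ENNReal.ofReal (b y) ∂ν)
      * wE (-m) ε = ∫⁻ z in A ×ˢ B,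
        ENNReal.ofReal (a z.1) * ENNReal.ofReal (b z.2) * wE (-m) ε ∂(μ.prod ν) := by
    rw [lintegral_mul_const _ (by fun_prop), ← Measure.prod_restrict,
      lintegral_prod_mul (f := fun x => ENNReal.ofReal (a x)) (g := fun y => ENNReal.ofReal (b y))
        (by fun_prop) (by fun_prop)]
  have hpi : π (A ×ˢ B) = ∫⁻ z in A ×ˢ B,
        ENNReal.ofReal (a z.1) * ENNReal.ofReal (b z.2) * wE (-c z.1 z.2) ε ∂(μ.prod ν) := by
    rw [hπ, withDensity_apply _ hAB]
    refine lintegral_congr fun z => ?_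
    rw [show z = (z.1, z.2) from rfl, key, ENNReal.ofReal_mul (mul_nonneg (ha0 _) (hb0 _)),
      ENNReal.ofReal_mul (ha0 _)]
    rfl
  rw [hint, hpi]
  constructor
  · intro hm
    refine setLIntegral_mono' hAB fun z hz => ?_
    gcongr
    exact wE_mono hε (neg_le_neg (hm _ hz.1 _ hz.2))
  · intro hm
    refine setLIntegral_mono' hAB fun z hz => ?_
    gcongr
    exact wE_mono hε (neg_le_neg (hm _ hz.1 _ hz.2))

lemma weak_lower {πε : ℝ → Measure (X × Y)} [∀ ε, IsProbabilityMeasure (πε ε)]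
    {πs : Measure (X × Y)} (hp : IsProbabilityMeasure πs) (hconv : TendstoWeakly πε πs)
    {G : Set (X × Y)} (hG : IsOpen G) (hpos : 0 < πs G) :
    ∃ κ : ℝ≥0∞, 0 < κ ∧ ∀ᶠ ε in 𝓝[>] (0 : ℝ), κ ≤ πε ε G := by
  let P : ℝ → ProbabilityMeasure (X × Y) := fun ε => ⟨πε ε, inferInstance⟩
  let Q : ProbabilityMeasure (X × Y) := ⟨πs, hp⟩
  have hT : Tendsto P (𝓝[>] (0 : ℝ)) (𝓝 Q) :=
    ProbabilityMeasure.tendsto_iff_forall_integral_tendsto.2 hconv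
  have h := ProbabilityMeasure.le_liminf_measure_open_of_tendsto hT hG
  obtain ⟨κ, h0, h1⟩ := exists_between hpos
  refine ⟨κ, h0, ?_⟩
  have := eventually_lt_of_lt_liminf (lt_of_lt_of_le h1 h)
  exact this.mono fun _ h => h.le

lemma ball_close {c : X → Y → ℝ} (hc : Continuous fun p : X × Y => c p.1 p.2) (a : X) (b : Y)
    {δ : ℝ} (hδ : 0 < δ) : ∀ᶠ r in 𝓝[>] (0 : ℝ), ∀ x ∈ Metric.ball a r, ∀ y ∈ Metric.ball b r,
      c a b - δ ≤ c x y ∧ c x y ≤ c a b + δ := by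
  obtain ⟨η, hη, h⟩ := Metric.continuousAt_iff.1 (hc.continuousAt (x := (a, b))) δ hδ
  filter_upwards [Ioo_mem_nhdsGT hη] with r hr x hx y hy
  have := h (x := (x, y)) (by
    rw [Prod.dist_eq]
    exact max_lt (lt_trans hx hr.2) (lt_trans hy hr.2))
  rw [Real.dist_eq, abs_lt] at this
  constructor <;> linarith [this.1, this.2]

lemma reach_est {c : X → Y → ℝ} (hc : Continuous fun p : X × Y => c p.1 p.2)
    {πε : ℝ → Measure (X × Y)} [∀ ε, IsProbabilityMeasure (πε ε)]
    {πs : Measure (X × Y)} (hp : IsProbabilityMeasure πs) (hconv : TendstoWeakly πε πs)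
    {α : ℝ → Set X → ℝ≥0∞} {β : ℝ → Set Y → ℝ≥0∞}
    (hαβ : ∀ ε, 0 < ε → ∀ A B, MeasurableSet A → MeasurableSet B → ∀ m : ℝ,
        ((∀ x ∈ A, ∀ y ∈ B, m ≤ c x y) → πε ε (A ×ˢ B) ≤ α ε A * β ε B * wE (-m) ε) ∧
        ((∀ x ∈ A, ∀ y ∈ B, c x y ≤ m) → α ε A * β ε B * wE (-m) ε ≤ πε ε (A ×ˢ B)))
    {y₀ v : Y} {t : ℝ} (h : Reach c (mSupport πs) y₀ v t) :
    ∀ δ > 0, ∀ᶠ r in 𝓝[>] (0 : ℝ), ∃ κ : ℝ≥0∞, 0 < κ ∧ ∀ᶠ ε in 𝓝[>] (0 : ℝ),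
      κ * β ε (Metric.ball y₀ r) * wE (t - δ) ε ≤ β ε (Metric.ball v r) := by
  induction h with
  | base =>
    intro δ hδ
    refine Eventually.of_forall fun r => ⟨1, one_pos, ?_⟩
    filter_upwards [self_mem_nhdsWithin] with ε hε
    have : wE (0 - δ) ε ≤ 1 := by
      rw [← wE_zero ε]; exact wE_mono hε (by linarith)
    calc _ ≤ 1 * β ε (Metric.ball y₀ r) * 1 := by gcongr
      _ = _ := by simp
  | @step v t a b _ hab ih =>
    intro δ hδ
    filter_upwards [ih (δ / 2) (by linarith), ball_close hc a b (δ := δ / 4) (by linarith),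
      ball_close hc a v (δ := δ / 4) (by linarith), self_mem_nhdsWithin] with r h1 h2 h3 hr
    obtain ⟨κ, hκ, h1⟩ := h1
    have hr : 0 < r := hr
    have hop : IsOpen (Metric.ball a r ×ˢ Metric.ball b r) :=
      Metric.isOpen_ball.prod Metric.isOpen_ball
    obtain ⟨κ', hκ', h4⟩ := weak_lower hp hconv hop
      (hab _ hop ⟨Metric.mem_ball_self hr, Metric.mem_ball_self hr⟩)
    refine ⟨κ' * κ, ENNReal.mul_pos hκ'.ne' hκ.ne', ?_⟩
    filter_upwards [h1, h4, self_mem_nhdsWithin] with ε h1 h4 hε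
    have u1 := (hαβ ε hε (Metric.ball a r) (Metric.ball b r) measurableSet_ball
      measurableSet_ball (c a b - δ / 4)).1 fun x hx y hy => (h2 x hx y hy).1
    have u2 := (hαβ ε hε (Metric.ball a r) (Metric.ball v r) measurableSet_ball
      measurableSet_ball (c a v + δ / 4)).2 fun x hx y hy => (h3 x hx y hy).2
    have u3 := u2.trans prob_le_one
    set A := α ε (Metric.ball a r)
    set Bb := β ε (Metric.ball b r)
    set Bv := β ε (Metric.ball v r)
    set B0 := β ε (Metric.ball y₀ r)
    calc κ' * κ * B0 * wE (t - c a v + c a b - δ) ε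
        = κ' * (κ * B0 * wE (t - δ / 2) ε) * wE (c a b - c a v - δ / 2) ε := by
          rw [show t - c a v + c a b - δ = (t - δ / 2) + (c a b - c a v - δ / 2) by ring,
            ← wE_mul]; ring
      _ ≤ (A * Bb * wE (-(c a b - δ / 4)) ε) * Bv * wE (c a b - c a v - δ / 2) ε := by
          gcongr; exact h4.trans u1
      _ = (A * Bv * wE (-(c a v + δ / 4)) ε) * Bb := by
          rw [show -(c a v + δ / 4) = -(c a b - δ / 4) + (c a b - c a v - δ / 2) by ring,
            ← wE_mul]; ring
      _ ≤ 1 * Bb := by gcongr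
      _ = Bb := one_mul _

lemma final_est {c : X → Y → ℝ} (hc : Continuous fun p : X × Y => c p.1 p.2)
    {πε : ℝ → Measure (X × Y)} [∀ ε, IsProbabilityMeasure (πε ε)]
    {πs : Measure (X × Y)} (hp : IsProbabilityMeasure πs) (hconv : TendstoWeakly πε πs)
    {α : ℝ → Set X → ℝ≥0∞} {β : ℝ → Set Y → ℝ≥0∞}
    (hαβ : ∀ ε, 0 < ε → ∀ A B, MeasurableSet A → MeasurableSet B → ∀ m : ℝ,
        ((∀ x ∈ A, ∀ y ∈ B, m ≤ c x y) → πε ε (A ×ˢ B) ≤ α ε A * β ε B * wE (-m) ε) ∧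
        ((∀ x ∈ A, ∀ y ∈ B, c x y ≤ m) → α ε A * β ε B * wE (-m) ε ≤ πε ε (A ×ˢ B)))
    {y' y : Y} {t : ℝ} (h : Reach c (mSupport πs) y' y t) {x : X} (hx : (x, y') ∈ mSupport πs)
    {U : Set (X × Y)} (hU : IsOpen U) (hxy : (x, y) ∈ U) {δ : ℝ} (hδ : 0 < δ) :
    ∀ᶠ ε in 𝓝[>] (0 : ℝ), wE (t + c x y' - c x y - δ) ε ≤ πε ε U := by
  obtain ⟨η, hη, hηU⟩ := Metric.isOpen_iff.1 hU _ hxy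
  have hex : ∀ᶠ r in 𝓝[>] (0 : ℝ), ∀ᶠ ε in 𝓝[>] (0 : ℝ),
      wE (t + c x y' - c x y - δ) ε ≤ πε ε U := by
    filter_upwards [reach_est hc hp hconv hαβ h (δ / 4) (by linarith),
      ball_close hc x y (δ := δ / 4) (by linarith),
      ball_close hc x y' (δ := δ / 4) (by linarith), Ioo_mem_nhdsGT hη] with r h1 h2 h3 hr
    obtain ⟨κ, hκ, h1⟩ := h1
    have hop : IsOpen (Metric.ball x r ×ˢ Metric.ball y' r) :=
      Metric.isOpen_ball.prod Metric.isOpen_ball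
    obtain ⟨κ', hκ', h4⟩ := weak_lower hp hconv hop
      (hx _ hop ⟨Metric.mem_ball_self hr.1, Metric.mem_ball_self hr.1⟩)
    have hsub : Metric.ball x r ×ˢ Metric.ball y r ⊆ U := by
      rw [ball_prod_same]
      exact (Metric.ball_subset_ball hr.2.le).trans hηU
    filter_upwards [h1, h4, self_mem_nhdsWithin,
      wE_small (δ := δ / 4) (by linarith) (ENNReal.mul_pos hκ'.ne' hκ.ne')] with ε h1 h4 hε h5
    have u1 := (hαβ ε hε (Metric.ball x r) (Metric.ball y' r) measurableSet_ball
      measurableSet_ball (c x y' - δ / 4)).1 fun x hx y hy => (h3 x hx y hy).1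
    have u2 := (hαβ ε hε (Metric.ball x r) (Metric.ball y r) measurableSet_ball
      measurableSet_ball (c x y + δ / 4)).2 fun x hx y hy => (h2 x hx y hy).2
    refine le_trans ?_ (u2.trans (measure_mono hsub))
    set A := α ε (Metric.ball x r)
    set By := β ε (Metric.ball y r)
    set By' := β ε (Metric.ball y' r)
    calc wE (t + c x y' - c x y - δ) ε
        = wE (-(δ / 4)) ε * wE (t + c x y' - c x y - 3 * δ / 4) ε := by
          rw [wE_mul]; congr 1; ring
      _ ≤ (κ' * κ) * wE (t + c x y' - c x y - 3 * δ / 4) ε := by gcongr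
      _ ≤ (A * By' * wE (-(c x y' - δ / 4)) ε) * κ * wE (t + c x y' - c x y - 3 * δ / 4) ε := by
          gcongr; exact h4.trans u1
      _ = A * (κ * By' * wE (t - δ / 4) ε) * wE (-(c x y + δ / 4)) ε := by
          have : wE (-(c x y' - δ / 4)) ε * wE (t + c x y' - c x y - 3 * δ / 4) ε =
            wE (t - δ / 4) ε * wE (-(c x y + δ / 4)) ε := by
            rw [wE_mul, wE_mul]; congr 1; ring
          calc _ = A * By' * κ * (wE (-(c x y' - δ / 4)) ε
                * wE (t + c x y' - c x y - 3 * δ / 4) ε) := by ring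
            _ = _ := by rw [this]; ring
      _ ≤ A * By * wE (-(c x y + δ / 4)) ε := by gcongr
  exact hex.exists.choose_spec

end Helpers

section Combinatorics

lemma reach_fin {c : X → Y → ℝ} {Γ : Set (X × Y)} {x : X} {y v : Y} {t : ℝ}
    (h : Reach c Γ y v t) :
    ∃ (k : ℕ) (p : Fin (k + 1) → X × Y), p 0 = (x, y) ∧ (∀ i, i ≠ 0 → p i ∈ Γ) ∧
      (p (Fin.last k)).2 = v ∧ (k = 0 → t = 0 ∧ v = y) ∧
      (∑ i, c (p i).1 (p i).2) - (∑ i : Fin k, c (p i.succ).1 (p i.castSucc).2) = c x y + t := by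
  induction h with
  | base => exact ⟨0, fun _ => (x, y), rfl, fun i hi => absurd (Fin.fin_one_eq_zero i) hi, rfl,
      fun _ => ⟨rfl, rfl⟩, by simp⟩
  | @step v t a b _ hab ih =>
    obtain ⟨k, p, h0, h1, h2, -, h3⟩ := ih
    refine ⟨k + 1, Fin.snoc p (a, b), ?_, ?_, by simp, by simp, ?_⟩
    · rw [← Fin.castSucc_zero, Fin.snoc_castSucc, h0]
    · intro i
      refine Fin.lastCases ?_ (fun j => ?_) i
      · intro _; simpa using hab
      · intro hj
        rw [Fin.snoc_castSucc]
        exact h1 j fun hj0 => hj (by rw [hj0]; rfl)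
    · have e : ∀ q : Fin (k + 2) → X × Y,
          (∑ i : Fin (k + 1), c (q i.succ).1 (q i.castSucc).2) =
          (∑ i : Fin k, c (q i.succ.castSucc).1 (q i.castSucc.castSucc).2) +
            c (q (Fin.last (k + 1))).1 (q (Fin.last k).castSucc).2 := fun q => by
        rw [Fin.sum_univ_castSucc]; rfl
      rw [Fin.sum_univ_castSucc, e]
      simp only [Fin.snoc_castSucc, Fin.snoc_last, h2]
      linarith

lemma reach_le_rateI {c : X → Y → ℝ} {Γ : Set (X × Y)} (hne : Γ.Nonempty) {x : X} {y v : Y}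
    {t : ℝ} (h : Reach c Γ y v t) :
    ((c x y + t - c x v : ℝ) : EReal) ≤ rateI c Γ (x, y) := by
  obtain ⟨k, p, h0, h1, h2, h4, h3⟩ := reach_fin (x := x) h
  rcases k with _ | k
  · obtain ⟨rfl, rfl⟩ := h4 rfl
    obtain ⟨q, hq⟩ := hne
    unfold rateI
    refine le_iSup_of_le 0 (le_iSup_of_le ![(x, v), q] (le_iSup_of_le rfl
      (le_iSup_of_le ?_ (le_iSup_of_le 1 ?_))))
    · intro i hi
      fin_cases i
      · exact absurd rfl hi
      · exact hq
    · simp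
  · unfold rateI
    refine le_iSup_of_le k (le_iSup_of_le p (le_iSup_of_le h0
      (le_iSup_of_le h1 (le_iSup_of_le (finRotate (k + 2)).symm ?_))))
    rw [EReal.coe_le_coe_iff]
    have e : ∑ i, c (p i).1 (p ((finRotate (k + 2)).symm i)).2
        = ∑ i, c (p (finRotate (k + 2) i)).1 (p i).2 := by
      rw [← Equiv.sum_comp (finRotate (k + 2))]
      simp
    have e' : ∑ i, c (p (finRotate (k + 2) i)).1 (p i).2 =
        (∑ i : Fin (k + 1), c (p i.succ).1 (p i.castSucc).2) + c x v := by
      rw [Fin.sum_univ_castSucc, finRotate_last, h0, h2]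
      congr 1
      refine Finset.sum_congr rfl fun i _ => ?_
      rw [finRotate_apply, Fin.coeSucc_eq_succ]
    rw [e, e']
    linarith

/-- The chain potential. -/
def pot (c : X → Y → ℝ) (Γ : Set (X × Y)) (y₀ : Y) (w : X) : EReal :=
  ⨆ v, (⨆ (t : ℝ) (_ : Reach c Γ y₀ v t), (t : EReal)) - (c w v : EReal)

lemma le_pot {c : X → Y → ℝ} {Γ : Set (X × Y)} {y₀ v : Y} {t : ℝ} (h : Reach c Γ y₀ v t)
    (w : X) : ((t - c w v : ℝ) : EReal) ≤ pot c Γ y₀ w := by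
  unfold pot
  refine le_iSup_of_le v ?_
  rw [EReal.coe_sub]
  exact EReal.sub_le_sub (le_iSup_of_le t (le_iSup_of_le h le_rfl)) le_rfl

lemma pot_le {c : X → Y → ℝ} {Γ : Set (X × Y)} {y₀ : Y} {w : X} {M : EReal}
    (h : ∀ v t, Reach c Γ y₀ v t → ((t - c w v : ℝ) : EReal) ≤ M) : pot c Γ y₀ w ≤ M := by
  unfold pot
  refine iSup_le fun v => EReal.sub_le_of_le_add (iSup_le fun t => iSup_le fun ht => ?_)
  have := h v t ht
  rw [EReal.coe_sub] at this
  exact (EReal.sub_le_iff_le_add (.inl (EReal.coe_ne_bot _)) (.inl (EReal.coe_ne_top _))).1 this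

lemma pot_step {c : X → Y → ℝ} {Γ : Set (X × Y)} {y₀ : Y} {a : X} {b : Y} (hab : (a, b) ∈ Γ)
    (w : X) : pot c Γ y₀ a + (c a b : EReal) ≤ pot c Γ y₀ w + (c w b : EReal) := by
  have : pot c Γ y₀ a ≤ pot c Γ y₀ w + (c w b : EReal) - (c a b : EReal) := by
    refine pot_le fun v t ht => ?_
    have h := le_pot (ht.step a b hab) w
    have h' : ((t - c a v : ℝ) : EReal) =
        ((t - c a v + c a b - c w b : ℝ) : EReal) + (c w b : EReal) - (c a b : EReal) := by
      norm_cast; ring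
    rw [h']
    exact EReal.sub_le_sub (add_le_add h le_rfl) le_rfl
  exact EReal.add_le_of_le_sub this

lemma pot_base {c : X → Y → ℝ} {Γ : Set (X × Y)} {y₀ : Y}
    (hm : ∀ t, Reach c Γ y₀ y₀ t → t ≤ 0) {x : X} (hx : (x, y₀) ∈ Γ) :
    pot c Γ y₀ x = ((-c x y₀ : ℝ) : EReal) := by
  refine le_antisymm (pot_le fun v t ht => ?_) ?_
  · rw [EReal.coe_le_coe_iff]
    have := hm _ (ht.step x y₀ hx)
    linarith
  · simpa using le_pot (Reach.base (c := c) (Γ := Γ) (y₀ := y₀)) x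

lemma pot_ne_bot {c : X → Y → ℝ} {Γ : Set (X × Y)} {y₀ : Y} (w : X) : pot c Γ y₀ w ≠ ⊥ :=
  ne_bot_of_le_ne_bot (EReal.coe_ne_bot _) (le_pot (Reach.base (c := c) (Γ := Γ) (y₀ := y₀)) w)

lemma pot_finite {c : X → Y → ℝ} {Γ : Set (X × Y)} {y₀ : Y}
    (hm : ∀ t, Reach c Γ y₀ y₀ t → t ≤ 0) {x : X} (hx : (x, y₀) ∈ Γ) {a : X} {b : Y}
    (hab : (a, b) ∈ Γ) : ∃ ρ : ℝ, pot c Γ y₀ a = ρ := by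
  have h := pot_step (c := c) (y₀ := y₀) hab x
  rw [pot_base hm hx] at h
  have hb := pot_ne_bot (c := c) (Γ := Γ) (y₀ := y₀) a
  induction hq : pot c Γ y₀ a with
  | bot => exact absurd hq hb
  | top =>
    rw [hq, EReal.top_add_coe, ← EReal.coe_add] at h
    exact absurd (top_le_iff.1 h) (EReal.coe_ne_top _)
  | coe ρ => exact ⟨ρ, rfl⟩

lemma pot_isKant {c : X → Y → ℝ} {Γ : Set (X × Y)} {y₀ : Y}
    (hm : ∀ t, Reach c Γ y₀ y₀ t → t ≤ 0) {x : X} (hx : (x, y₀) ∈ Γ) :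
    IsKantorovichPotential c Γ (pot c Γ y₀) := by
  refine ⟨⟨pot_ne_bot, ⟨x, ?_⟩, _, fun _ => rfl⟩, ?_⟩
  · rw [pot_base hm hx]; exact EReal.coe_ne_top _
  · rintro ⟨a, b⟩ hab
    obtain ⟨ρ, hρ⟩ := pot_finite hm hx hab
    have : cConj c (pot c Γ y₀) b = pot c Γ y₀ a + (c a b : EReal) :=
      le_antisymm (iInf_le _ a) (le_iInf fun w => pot_step hab w)
    change cConj c (pot c Γ y₀) b - pot c Γ y₀ a = (c a b : EReal)
    rw [this, hρ]
    norm_cast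
    ring

end Combinatorics

section Statement

variable {X Y : Type*}
  [MeasurableSpace X] [MetricSpace X] [PolishSpace X] [BorelSpace X]
  [MeasurableSpace Y] [MetricSpace Y] [PolishSpace Y] [BorelSpace Y]

/-- large deviations lower bound under uniqueness of Kantorovich potentials. -/
theorem stmt9 (μ : Measure X) (ν : Measure Y)
    [IsProbabilityMeasure μ] [IsProbabilityMeasure ν]
    (c : X → Y → ℝ) (hc : Continuous fun p : X × Y => c p.1 p.2) (hc0 : ∀ x y, 0 ≤ c x y)
    (πε : ℝ → Measure (X × Y)) [∀ ε, IsProbabilityMeasure (πε ε)]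
    (hπε : ∀ ε, 0 < ε → IsCyclInvariant c ε μ ν (πε ε))
    (πs : Measure (X × Y)) (hπs : IsCoupling μ ν πs) (hconv : TendstoWeakly πε πs)
    (huniq : UniquenessOfPotentials c (mSupport πs) (Prod.fst '' mSupport πs)) :
    ∀ U : Set (X × Y), IsOpen U →
      U ⊆ (Prod.fst '' mSupport πs) ×ˢ (Prod.snd '' mSupport πs) →
      -(⨅ z ∈ U, rateI c (mSupport πs) z) ≤
        liminf (fun (ε : ℝ) => (ε : EReal) * ENNReal.log (πε ε U)) (𝓝[>] (0 : ℝ)) := by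
  intro U hU hUsub
  have hp : IsProbabilityMeasure πs := hπs.1
  have hex : ∀ ε : ℝ, ∃ (α : Set X → ℝ≥0∞) (β : Set Y → ℝ≥0∞), 0 < ε →
      ∀ A B, MeasurableSet A → MeasurableSet B → ∀ m : ℝ,
        ((∀ x ∈ A, ∀ y ∈ B, m ≤ c x y) → πε ε (A ×ˢ B) ≤ α A * β B * wE (-m) ε) ∧
        ((∀ x ∈ A, ∀ y ∈ B, c x y ≤ m) → α A * β B * wE (-m) ε ≤ πε ε (A ×ˢ B)) := by
    intro ε
    by_cases hε : 0 < ε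
    · obtain ⟨α, β, h⟩ := exists_factors hc hε (hπε ε hε)
      exact ⟨α, β, fun _ => h⟩
    · exact ⟨fun _ => 0, fun _ => 0, fun h => absurd h hε⟩
  choose α β hαβ using hex
  set Γ := mSupport πs with hΓ
  have hmono : ∀ (x : X) (y : Y), (x, y) ∈ Γ → ∀ t, Reach c Γ y y t → t ≤ 0 := by
    intro x y hxy t ht
    by_contra! hpos
    have h1 := final_est hc hp hconv hαβ ht hxy isOpen_univ (mem_univ _)
      (δ := t / 2) (by linarith)
    obtain ⟨ε, h2, hε⟩ := (h1.and self_mem_nhdsWithin).exists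
    have hε : 0 < ε := hε
    have h3 := h2.trans prob_le_one
    unfold wE at h3
    rw [ENNReal.ofReal_le_one, Real.exp_le_one_iff] at h3
    have : 0 < (t + c x y - c x y - t / 2) / ε := div_pos (by linarith) hε
    linarith
  rw [EReal.neg_le]
  refine le_iInf₂ fun z hz => ?_
  rw [EReal.neg_le]
  obtain ⟨x, y⟩ := z
  obtain ⟨⟨⟨x₁, y'⟩, hxy', hx1⟩, ⟨⟨x', y₁⟩, hx'y, hy1⟩⟩ := hUsub hz
  simp only at hx1 hy1
  subst hx1 hy1
  obtain ⟨ρ, hρ⟩ := pot_finite (hmono _ _ hx'y) hx'y hxy'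
  obtain ⟨ρ', hρ'⟩ := pot_finite (hmono _ _ hxy') hxy' hx'y
  have hu := huniq _ _ (pot_isKant (hmono _ _ hx'y) hx'y) (pot_isKant (hmono _ _ hxy') hxy')
    x₁ ⟨_, hxy', rfl⟩ x' ⟨_, hx'y, rfl⟩
  rw [hρ, hρ', pot_base (hmono _ _ hx'y) hx'y, pot_base (hmono _ _ hxy') hxy'] at hu
  have hu' : ρ - (-c x₁ y') = -c x' y₁ - ρ' := by exact_mod_cast hu
  have hI : ((c x₁ y₁ + ρ : ℝ) : EReal) ≤ rateI c Γ (x₁, y₁) := by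
    have h1 : pot c Γ y₁ x₁ ≤ rateI c Γ (x₁, y₁) - (c x₁ y₁ : EReal) := by
      refine pot_le fun v t ht => ?_
      have h2 := reach_le_rateI ⟨_, hxy'⟩ (x := x₁) ht
      have h3 : ((t - c x₁ v : ℝ) : EReal) = ((c x₁ y₁ + t - c x₁ v : ℝ) : EReal)
          - (c x₁ y₁ : EReal) := by
        norm_cast; ring
      rw [h3]
      exact EReal.sub_le_sub h2 le_rfl
    rw [hρ] at h1
    have := EReal.add_le_of_le_sub h1
    rw [add_comm (c x₁ y₁)]
    exact_mod_cast this
  refine (EReal.neg_le_neg_iff.2 hI).trans ?_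
  rw [← EReal.coe_neg]
  refine EReal.ge_of_forall_gt_iff_ge.1 fun s hs => ?_
  rw [EReal.coe_lt_coe_iff] at hs
  set δ : ℝ := (-(c x₁ y₁ + ρ) - s) / 2 with hδdef
  have hδ : 0 < δ := by rw [hδdef]; linarith
  obtain ⟨v, t, ht, hvt⟩ : ∃ v t, Reach c Γ y' v t ∧ ρ' - δ < t - c x' v := by
    by_contra! hcon
    have h1 : pot c Γ y' x' ≤ ((ρ' - δ : ℝ) : EReal) :=
      pot_le fun v t ht => EReal.coe_le_coe_iff.2 (hcon v t ht)
    rw [hρ', EReal.coe_le_coe_iff] at h1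
    linarith
  have hfin := final_est hc hp hconv hαβ (ht.step x' y₁ hx'y) hxy' hU hz hδ
  refine le_liminf_of_le (by isBoundedDefault) ?_
  filter_upwards [hfin, self_mem_nhdsWithin] with ε h1 hε
  have hε : 0 < ε := hε
  have h2 : wE s ε ≤ πε ε U := (wE_mono hε (by rw [hδdef] at hvt ⊢; linarith)).trans h1
  have h3 := ENNReal.log_le_log h2
  unfold wE at h3
  rw [ENNReal.log_ofReal_of_pos (Real.exp_pos _), Real.log_exp] at h3
  calc (s : EReal) = (ε : EReal) * ((s / ε : ℝ) : EReal) := by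
        rw [← EReal.coe_mul]; congr 1; field_simp
    _ ≤ _ := mul_le_mul_of_nonneg_left h3 (EReal.coe_nonneg.2 hε.le)

end Statement

end EOT
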